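/- Let G = ⟨a, b ∣ aba = bab⟩ be the trefoil knot group, let φ₅ : G → ℤ/5ℤ be the homomorphism sending both generators a and b to 1, let U₅ = ker φ₅, and let M₅ be the normal closure in G of {a⁵}. Then M₅ ≤ U₅ and the quotient group U₅/M₅ is isomorphic to SL(2, ℤ/5ℤ), the group of 2×2 matrices of determinant 1 over the field with five elements. -/

import Mathlib

/-- The single relator `aba(bab)⁻¹` of the trefoil knot group, with `a = of true`,
`b = of false`. -/
def trefoilRels : Set (FreeGroup Bool) :=
  {FreeGroup.of true * FreeGroup.of false * FreeGroup.of true *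
    (FreeGroup.of false * FreeGroup.of true * FreeGroup.of false)⁻¹}

/-- The trefoil knot group `⟨a, b ∣ aba = bab⟩`. -/
abbrev TrefoilGroup := PresentedGroup trefoilRels

/-!
Put `Γ = G/M₅`. In a group generated by `a`, `b` with `aba = bab` and `a⁵ = 1`, the full twist
`z = (aba)²` is central; conjugation by `ba⁻¹b²` sends `a⁻¹z²` to `a`, so fifth powers give
`z¹⁰ = 1`. Modulo `z` the group is a quotient of the rotation group of the icosahedron, and
enumerating the vertices of the icosahedron, that is the cosets of `⟨a⟩`, shows that it has at most
`60` elements. Hence `|Γ| ≤ 600`. On the other hand `φ₅` together with the representation of `G` by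
transvections maps `G` onto `ℤ/5 × SL(2, ℤ/5)`, which has exactly `5 · 120 = 600` elements. So `M₅`
is the kernel of this joint homomorphism, and `U₅/M₅` is the kernel of the first projection.
-/

section GroupTheory

open DoubleCoset
open scoped Pointwise

variable {G H : Type*} [Group G] [Group H]

theorem exists_lt_eq_pow_of_mem_zpowers {a x : G} {n : ℕ} (hn : 0 < n) (ha : a ^ n = 1)
    (hx : x ∈ Subgroup.zpowers a) : ∃ k < n, x = a ^ k := by
  classical
  have hfin : IsOfFinOrder a := isOfFinOrder_iff_pow_eq_one.mpr ⟨n, hn, ha⟩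
  obtain ⟨k, hk, rfl⟩ := Finset.mem_image.mp (hfin.mem_zpowers_iff_mem_range_orderOf.mp hx)
  exact ⟨k, (Finset.mem_range.mp hk).trans_le (orderOf_le_of_pow_eq_one hn ha), rfl⟩

theorem finite_zpowers_and_card_le {a : G} {n : ℕ} (hn : 0 < n) (ha : a ^ n = 1) :
    Finite (Subgroup.zpowers a) ∧ Nat.card (Subgroup.zpowers a) ≤ n :=
  ⟨(isOfFinOrder_iff_pow_eq_one.mpr ⟨n, hn, ha⟩).finite_zpowers,
    (Nat.card_zpowers a).trans_le (orderOf_le_of_pow_eq_one hn ha)⟩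

theorem zpowers_normal_of_mem_center {z : G} (hz : z ∈ Subgroup.center G) :
    (Subgroup.zpowers z).Normal where
  conj_mem x hx g := by
    have hx' : x ∈ Subgroup.center G := (Subgroup.zpowers_le.mpr hz) hx
    rwa [Subgroup.mem_center_iff.mp hx' g, mul_inv_cancel_right]

theorem closure_pair_map_eq_top {f : G →* H} (hf : Function.Surjective f) {a b : G}
    (hab : Subgroup.closure {a, b} = ⊤) : Subgroup.closure {f a, f b} = ⊤ := by
  rw [← Set.image_pair, ← MonoidHom.map_closure, hab, Subgroup.map_top_of_surjective f hf]

theorem eq_univ_of_closure_eq_top_of_smul_mem {X : Type*} [MulAction G X]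
    [MulAction.IsPretransitive G X] {S : Set G} (hS : Subgroup.closure S = ⊤) {T : Set X}
    (hfin : T.Finite) (hne : T.Nonempty) (hT : ∀ g ∈ S, ∀ x ∈ T, g • x ∈ T) : T = Set.univ := by
  have hstab : MulAction.stabilizer G T = ⊤ := top_unique <| hS ▸ (Subgroup.closure_le _).mpr
    fun g hg ↦ (MulAction.mem_stabilizer_set_iff_smul_set_subset hfin).mpr <|
      Set.smul_set_subset_iff.mpr fun x hx ↦ hT g hg x hx
  obtain ⟨x, hx⟩ := hne
  refine Set.eq_univ_of_forall fun y ↦ ?_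
  obtain ⟨g, rfl⟩ := MulAction.exists_smul_eq G x y
  have hg : g ∈ MulAction.stabilizer G T := hstab ▸ Subgroup.mem_top g
  exact hg ▸ Set.smul_mem_smul_set hx

theorem finite_doubleCoset (g : G) (A B : Subgroup G) [Finite A] [Finite B] :
    (doubleCoset g (A : Set G) B).Finite :=
  ((Set.toFinite (A : Set G)).mul (Set.finite_singleton g)).mul (Set.toFinite (B : Set G))

theorem ncard_doubleCoset_le (g : G) (A B : Subgroup G) :
    (doubleCoset g (A : Set G) B).ncard ≤ Nat.card A * Nat.card B :=
  calc (doubleCoset g (A : Set G) B).ncard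
      ≤ Nat.card ((A : Set G) * {g} : Set G) * Nat.card B := Set.natCard_mul_le
    _ ≤ Nat.card A * Nat.card ({g} : Set G) * Nat.card B :=
      Nat.mul_le_mul_right _ Set.natCard_mul_le
    _ = Nat.card A * Nat.card B := by rw [Nat.card_unique (α := ({g} : Set G)), mul_one]

theorem doubleCoset_eq_smul {g : G} {A : Subgroup G} (hg : ∀ x ∈ A, g⁻¹ * x * g ∈ A) :
    doubleCoset g (A : Set G) A = g • (A : Set G) := by
  ext x
  rw [mem_doubleCoset, Set.mem_smul_set]
  constructor
  · rintro ⟨i, hi, j, hj, rfl⟩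
    exact ⟨g⁻¹ * i * g * j, A.mul_mem (hg i hi) hj, by rw [smul_eq_mul]; group⟩
  · rintro ⟨j, hj, rfl⟩
    exact ⟨1, A.one_mem, j, hj, by rw [one_mul, smul_eq_mul]⟩

theorem ncard_doubleCoset_eq {g : G} {A : Subgroup G} (hg : ∀ x ∈ A, g⁻¹ * x * g ∈ A) :
    (doubleCoset g (A : Set G) A).ncard = Nat.card A :=
  (congrArg Set.ncard (doubleCoset_eq_smul hg)).trans (Set.ncard_smul_set g _)

end GroupTheory

section ProductHom

variable {G A B : Type*} [Group G] [Group A] [Group B] {φ : G →* A} {ψ : G →* B}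

theorem prod_surjective_of_forall_exists (hφ : ∀ x, ∃ g, φ g = x ∧ ψ g = 1)
    (hψ : Function.Surjective ψ) : Function.Surjective (φ.prod ψ) := by
  rintro ⟨x, y⟩
  obtain ⟨g, rfl⟩ := hψ y
  obtain ⟨k, hφk, hψk⟩ := hφ (x * (φ g)⁻¹)
  exact ⟨k * g, by rw [MonoidHom.prod_apply, map_mul, map_mul, hφk, hψk, inv_mul_cancel_right,
    one_mul]⟩

/-- If `φ` and `ψ` are jointly surjective, then `ψ` identifies `ker φ` modulo the joint kernel `N`
with the target of `ψ`. Having `N` as a variable avoids rewriting inside the quotient type. -/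
noncomputable def kerQuotientEquivOfProdSurjective {N : Subgroup G} [N.Normal]
    (hN : N = (φ.prod ψ).ker) (h : Function.Surjective (φ.prod ψ)) :
    φ.ker ⧸ N.subgroupOf φ.ker ≃* B :=
  have hsurj : Function.Surjective (ψ.comp φ.ker.subtype) := fun y ↦ by
    obtain ⟨g, hg⟩ := h (1, y)
    exact ⟨⟨g, congrArg Prod.fst hg⟩, congrArg Prod.snd hg⟩
  have hker : N.subgroupOf φ.ker = (ψ.comp φ.ker.subtype).ker := by
    rw [hN, MonoidHom.ker_prod, Subgroup.inf_subgroupOf_left]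
    rfl
  (QuotientGroup.quotientMulEquivOfEq hker).trans
    (QuotientGroup.quotientKerEquivOfSurjective _ hsurj)

end ProductHom

/-- The defining relation `aba = bab` of the braid group on three strands, which is also the trefoil
group. -/
def BraidRel {G : Type*} [Mul G] (a b : G) : Prop := a * b * a = b * a * b

/-- The full twist `(aba)²`, which generates the centre of the braid group on three strands. -/
def fullTwist {G : Type*} [Monoid G] (a b : G) : G := (a * b * a) ^ 2

/-- An element that inverts `a` under conjugation when `aba = bab`, `a⁵ = 1` and the full twist is
trivial. In the rotation group of the icosahedron, with `a` a rotation about a vertex, it moves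
this vertex to the opposite one. -/
def antipode {G : Type*} [Group G] (a b : G) : G := b * a⁻¹ * b ^ 2

/-- Representatives of the double cosets of `⟨a⟩`. When `⟨a⟩` is a vertex stabiliser in the rotation
group of the icosahedron, they correspond to its orbits on vertices: the vertex itself, the two
rings of five vertices, and the opposite vertex. -/
def icosahedralReps {G : Type*} [Group G] (a b : G) : Set G := {1, b, b ^ 2, antipode a b}

/-- The union of the double cosets of `⟨a⟩` represented by `icosahedralReps a b`. -/
def icosahedralSet {G : Type*} [Group G] (a b : G) : Set G :=
  ⋃ r ∈ icosahedralReps a b, DoubleCoset.doubleCoset r (Subgroup.zpowers a) (Subgroup.zpowers a)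

theorem map_fullTwist {G H : Type*} [Monoid G] [Monoid H] (f : G →* H) (a b : G) :
    f (fullTwist a b) = fullTwist (f a) (f b) := by
  simp only [fullTwist, map_pow, map_mul]

section IcosahedralSet

variable {G : Type*} [Group G] {a b x : G}

theorem mem_icosahedralSet :
    x ∈ icosahedralSet a b ↔ ∃ r ∈ icosahedralReps a b, ∃ m n : ℤ, x = a ^ m * r * a ^ n := by
  simp only [icosahedralSet, Set.mem_iUnion₂, DoubleCoset.mem_doubleCoset, SetLike.mem_coe,
    Subgroup.exists_mem_zpowers, exists_prop]

theorem left_mul_mem_icosahedralSet (hx : x ∈ icosahedralSet a b) :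
    a * x ∈ icosahedralSet a b := by
  obtain ⟨r, hr, m, n, rfl⟩ := mem_icosahedralSet.mp hx
  exact mem_icosahedralSet.mpr ⟨r, hr, 1 + m, n, by simp only [zpow_one_add, mul_assoc]⟩

theorem mul_zpow_mem_icosahedralSet (hx : x ∈ icosahedralSet a b) (k : ℤ) :
    x * a ^ k ∈ icosahedralSet a b := by
  obtain ⟨r, hr, m, n, rfl⟩ := mem_icosahedralSet.mp hx
  exact mem_icosahedralSet.mpr ⟨r, hr, m, n + k, by simp only [zpow_add, mul_assoc]⟩

theorem finite_icosahedralSet [Finite (Subgroup.zpowers a)] : (icosahedralSet a b).Finite :=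
  Set.Finite.biUnion (Set.toFinite {1, b, b ^ 2, antipode a b}) fun r _ ↦ finite_doubleCoset r _ _

end IcosahedralSet

namespace BraidRel

variable {G : Type*} [Group G] {a b : G}

protected theorem eq (h : BraidRel a b) : a * b * a = b * a * b := h

theorem symm (h : BraidRel a b) : BraidRel b a := h.eq.symm

theorem map {H : Type*} [Group H] (h : BraidRel a b) (f : G →* H) : BraidRel (f a) (f b) := by
  simpa only [BraidRel, map_mul] using congrArg f h

theorem semiconjBy_mul (h : BraidRel a b) : SemiconjBy (a * b) a b := by
  simpa only [SemiconjBy, mul_assoc] using h.eq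

theorem pow_eq_one_right (h : BraidRel a b) {n : ℕ} (ha : a ^ n = 1) : b ^ n = 1 := by
  simpa only [SemiconjBy, ha, mul_one, right_eq_mul] using h.semiconjBy_mul.pow_right n

theorem inv_mul_mul (h : BraidRel a b) : b⁻¹ * a * b = a * b * a⁻¹ := by
  rw [eq_mul_inv_iff_mul_eq, mul_assoc, mul_assoc, inv_mul_eq_iff_eq_mul]
  simpa only [mul_assoc] using h.eq

theorem fullTwist_comm (h : BraidRel a b) : fullTwist b a = fullTwist a b :=
  congrArg (· ^ 2) h.symm

theorem commute_fullTwist_left (h : BraidRel a b) : Commute a (fullTwist a b) := by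
  have hab : SemiconjBy (a * b * a) a b := h.semiconjBy_mul.mul_left (Commute.refl a)
  have hba : SemiconjBy (a * b * a) b a := by
    rw [h.eq]
    exact h.symm.semiconjBy_mul.mul_left (Commute.refl b)
  rw [fullTwist, pow_two]
  exact (hba.mul_left hab).symm

theorem commute_fullTwist_right (h : BraidRel a b) : Commute b (fullTwist a b) :=
  h.fullTwist_comm ▸ h.symm.commute_fullTwist_left

theorem commute_conj_fullTwist (h : BraidRel a b) : Commute (a * b * a⁻¹) (fullTwist a b) :=
  (h.commute_fullTwist_left.mul_left h.commute_fullTwist_right).mul_left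
    h.commute_fullTwist_left.inv_left

theorem fullTwist_mem_center (h : BraidRel a b) (hab : Subgroup.closure {a, b} = ⊤) :
    fullTwist a b ∈ Subgroup.center G := by
  rw [← Subgroup.centralizer_univ, ← Subgroup.coe_top, ← hab, Subgroup.centralizer_closure]
  rintro x (rfl | rfl)
  exacts [h.commute_fullTwist_left, h.commute_fullTwist_right]

theorem mul_sq_mul_mul_sq (h : BraidRel a b) : b * a ^ 2 * b * a ^ 2 = fullTwist a b :=
  calc b * a ^ 2 * b * a ^ 2 = b * a * (a * b * a) * a := by simp only [pow_two, mul_assoc]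
    _ = b * a * (b * a * b) * a := by rw [h.eq]
    _ = b * a * b * (a * b * a) := by simp only [mul_assoc]
    _ = fullTwist a b := by rw [← h.eq, fullTwist, pow_two]

theorem mul_sq_mul (h : BraidRel a b) : b * a ^ 2 * b = (a ^ 2)⁻¹ * fullTwist a b := by
  rw [(h.commute_fullTwist_left.pow_left 2).inv_left.eq, ← h.mul_sq_mul_mul_sq,
    mul_inv_cancel_right]

theorem mul_pow_succ_mul (h : BraidRel a b) (k : ℕ) :
    b * a ^ (k + 1) * b = b * a ^ k * b * (a * b * a⁻¹) := by
  rw [← h.inv_mul_mul]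
  group

theorem mul_pow_three_mul (h : BraidRel a b) :
    b * a ^ 3 * b = a⁻¹ * b * a⁻¹ * fullTwist a b := by
  rw [h.mul_pow_succ_mul 2, h.mul_sq_mul, mul_assoc, ← h.commute_conj_fullTwist.eq]
  group

theorem mul_pow_four_mul (h : BraidRel a b) :
    b * a ^ 4 * b = a⁻¹ * b ^ 2 * a⁻¹ * fullTwist a b := by
  rw [h.mul_pow_succ_mul 3, h.mul_pow_three_mul, mul_assoc, ← h.commute_conj_fullTwist.eq,
    pow_two b]
  group

theorem mul_mul_sq (h : BraidRel a b) : b * a * b ^ 2 = a ^ 2 * b * a :=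
  calc b * a * b ^ 2 = b * a * b * b := by rw [pow_two, ← mul_assoc]
    _ = a * (b * a * b) := by rw [← mul_assoc, ← mul_assoc, h.eq]
    _ = a ^ 2 * b * a := by rw [← h.eq, pow_two a]; simp only [mul_assoc]

theorem mul_inv_mul (h : BraidRel a b) (ha : a ^ 5 = 1) :
    b * a⁻¹ * b = a⁻¹ * b ^ 2 * a⁻¹ * fullTwist a b := by
  have ha' : a⁻¹ = a ^ 4 := inv_eq_of_mul_eq_one_right (by rw [← pow_succ', ha])
  rw [← h.mul_pow_four_mul, ha']

theorem semiconjBy_antipode (h : BraidRel a b) (ha : a ^ 5 = 1) :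
    SemiconjBy (antipode a b) (a⁻¹ * fullTwist a b ^ 2) a := by
  have hflip := h.mul_inv_mul ha
  have hb := h.commute_fullTwist_right
  simp only [SemiconjBy, antipode]
  generalize fullTwist a b = z at *
  calc b * a⁻¹ * b ^ 2 * (a⁻¹ * z ^ 2)
      = b * (a⁻¹ * b ^ 2 * a⁻¹ * z) * z := by rw [pow_two z]; simp only [mul_assoc]
    _ = b ^ 2 * a⁻¹ * (b * z) := by rw [← hflip, pow_two]; simp only [mul_assoc]
    _ = a * (a⁻¹ * b ^ 2 * a⁻¹ * z) * b := by rw [hb.eq]; group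
    _ = a * (b * a⁻¹ * b ^ 2) := by rw [← hflip, pow_two]; simp only [mul_assoc]

theorem fullTwist_pow_ten (h : BraidRel a b) (ha : a ^ 5 = 1) : fullTwist a b ^ 10 = 1 := by
  have hcomm : Commute a⁻¹ (fullTwist a b ^ 2) := (h.commute_fullTwist_left.pow_right 2).inv_left
  simpa only [SemiconjBy, hcomm.mul_pow, inv_pow, ha, inv_one, one_mul, ← pow_mul, Nat.reduceMul,
    mul_eq_left] using (h.semiconjBy_antipode ha).pow_right 5

section TrivialFullTwist

theorem semiconjBy_antipode_inv (h : BraidRel a b) (ha : a ^ 5 = 1) (hz : fullTwist a b = 1) :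
    SemiconjBy (antipode a b) a⁻¹ a := by
  simpa only [hz, one_pow, mul_one] using h.semiconjBy_antipode ha

theorem pow_three_eq_mul_sq_mul (h : BraidRel a b) (ha : a ^ 5 = 1) (hz : fullTwist a b = 1) :
    b ^ 3 = a * b ^ 2 * a := by
  rw [h.symm.mul_sq_mul, h.fullTwist_comm, hz, mul_one, eq_inv_iff_mul_eq_one, ← pow_add,
    h.pow_eq_one_right ha]

theorem mul_sq_mul_sq (h : BraidRel a b) (hz : fullTwist a b = 1) :
    b * a ^ 2 * b ^ 2 = (a ^ 2)⁻¹ * b := by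
  rw [pow_two b, ← mul_assoc, h.mul_sq_mul, hz, mul_one]

theorem mul_pow_three_mul_sq (h : BraidRel a b) (ha : a ^ 5 = 1) (hz : fullTwist a b = 1) :
    b * a ^ 3 * b ^ 2 = (a ^ 2)⁻¹ * b ^ 2 * a⁻¹ :=
  calc b * a ^ 3 * b ^ 2 = b * a ^ 3 * b * b := by rw [pow_two b, ← mul_assoc]
    _ = a⁻¹ * (b * a⁻¹ * b) := by
      rw [h.mul_pow_three_mul, hz, mul_one]; simp only [mul_assoc]
    _ = (a ^ 2)⁻¹ * b ^ 2 * a⁻¹ := by rw [h.mul_inv_mul ha, hz, mul_one]; group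

theorem mul_antipode (h : BraidRel a b) (ha : a ^ 5 = 1) (hz : fullTwist a b = 1) :
    b * antipode a b = a ^ 2 * b ^ 2 * a ^ 2 := by
  have ha' : (a ^ 2)⁻¹ = a ^ 3 := inv_eq_of_mul_eq_one_right (by rw [← pow_add, ha])
  have hflip : a⁻¹ * b ^ 2 * a⁻¹ = b * a⁻¹ * b := by rw [h.mul_inv_mul ha, hz, mul_one]
  have hcube : a⁻¹ * b * a⁻¹ = b * a ^ 3 * b := by rw [h.mul_pow_three_mul, hz, mul_one]
  calc b * antipode a b = b ^ 2 * (a⁻¹ * b ^ 2 * a⁻¹) * a := by rw [antipode, pow_two b]; group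
    _ = b ^ 3 * (a⁻¹ * b * a⁻¹) * a ^ 2 := by rw [hflip]; group
    _ = b ^ 4 * ((a ^ 2)⁻¹ * b) * a ^ 2 := by rw [hcube, ha']; group
    _ = b ^ 5 * (a ^ 2 * b ^ 2 * a ^ 2) := by rw [← h.mul_sq_mul_sq hz]; group
    _ = a ^ 2 * b ^ 2 * a ^ 2 := by rw [h.pow_eq_one_right ha, one_mul]

theorem mul_pow_mul_mem_icosahedralSet (h : BraidRel a b) (hz : fullTwist a b = 1) {k : ℕ}
    (hk : k < 5) : b * a ^ k * b ∈ icosahedralSet a b := by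
  rw [mem_icosahedralSet]
  simp only [icosahedralReps, Set.exists_mem_insert, Set.mem_singleton_iff, exists_eq_left]
  interval_cases k
  · exact .inr <| .inr <| .inl ⟨0, 0, by rw [pow_two b]; group⟩
  · exact .inr <| .inl ⟨1, 1, by rw [pow_one, ← h.eq, zpow_one]⟩
  · exact .inl ⟨-2, 0, by rw [h.mul_sq_mul, hz]; group⟩
  · exact .inr <| .inl ⟨-1, -1, by rw [h.mul_pow_three_mul, hz]; group⟩
  · exact .inr <| .inr <| .inl ⟨-1, -1, by rw [h.mul_pow_four_mul, hz]; group⟩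

theorem mul_pow_mul_sq_mem_icosahedralSet (h : BraidRel a b) (ha : a ^ 5 = 1)
    (hz : fullTwist a b = 1) {k : ℕ} (hk : k < 5) : b * a ^ k * b ^ 2 ∈ icosahedralSet a b := by
  have ha' : a⁻¹ = a ^ 4 := inv_eq_of_mul_eq_one_right (by rw [← pow_succ', ha])
  rw [mem_icosahedralSet]
  simp only [icosahedralReps, Set.exists_mem_insert, Set.mem_singleton_iff, exists_eq_left]
  interval_cases k
  · exact .inr <| .inr <| .inl ⟨1, 1, by
      rw [pow_zero, mul_one, ← pow_succ', h.pow_three_eq_mul_sq_mul ha hz, zpow_one]⟩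
  · exact .inr <| .inl ⟨2, 1, by rw [pow_one, h.mul_mul_sq, zpow_ofNat, zpow_one]⟩
  · exact .inr <| .inl ⟨-2, 0, by rw [h.mul_sq_mul_sq hz]; group⟩
  · exact .inr <| .inr <| .inl ⟨-2, -1, by rw [h.mul_pow_three_mul_sq ha hz]; group⟩
  · exact .inr <| .inr <| .inr ⟨0, 0, by rw [antipode, ha']; group⟩

theorem mul_pow_mul_antipode_mem_icosahedralSet (h : BraidRel a b) (ha : a ^ 5 = 1)
    (hz : fullTwist a b = 1) (k : ℕ) : b * a ^ k * antipode a b ∈ icosahedralSet a b := by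
  rw [mul_assoc, ← ((h.semiconjBy_antipode_inv ha hz).pow_right k).eq, ← mul_assoc,
    h.mul_antipode ha hz]
  exact mem_icosahedralSet.mpr ⟨b ^ 2, .inr (.inr (.inl rfl)), 2, 2 - k, by group⟩

theorem right_mul_mem_icosahedralSet (h : BraidRel a b) (ha : a ^ 5 = 1) (hz : fullTwist a b = 1)
    {x : G} (hx : x ∈ icosahedralSet a b) : b * x ∈ icosahedralSet a b := by
  obtain ⟨r, hr, m, n, rfl⟩ := mem_icosahedralSet.mp hx
  obtain ⟨k, hk, hmk⟩ := exists_lt_eq_pow_of_mem_zpowers (by norm_num) ha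
    (Subgroup.zpow_mem_zpowers a m)
  suffices b * a ^ k * r ∈ icosahedralSet a b by
    simpa only [hmk, mul_assoc] using mul_zpow_mem_icosahedralSet this n
  rcases hr with rfl | rfl | rfl | rfl
  · exact mem_icosahedralSet.mpr ⟨b, .inr (.inl rfl), 0, k, by group⟩
  · exact h.mul_pow_mul_mem_icosahedralSet hz hk
  · exact h.mul_pow_mul_sq_mem_icosahedralSet ha hz hk
  · exact h.mul_pow_mul_antipode_mem_icosahedralSet ha hz k

theorem icosahedralSet_eq_univ (h : BraidRel a b) (ha : a ^ 5 = 1) (hz : fullTwist a b = 1)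
    (hab : Subgroup.closure {a, b} = ⊤) : icosahedralSet a b = Set.univ := by
  have := (finite_zpowers_and_card_le (by norm_num) ha).1
  refine eq_univ_of_closure_eq_top_of_smul_mem hab finite_icosahedralSet
    ⟨1, mem_icosahedralSet.mpr ⟨1, .inl rfl, 0, 0, by group⟩⟩ ?_
  rintro g (rfl | rfl) x hx
  exacts [left_mul_mem_icosahedralSet hx, h.right_mul_mem_icosahedralSet ha hz hx]

theorem ncard_icosahedralSet_le (h : BraidRel a b) (ha : a ^ 5 = 1) (hz : fullTwist a b = 1) :
    (icosahedralSet a b).ncard ≤ 60 := by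
  set A := Subgroup.zpowers a
  have hA : Nat.card A ≤ 5 := (finite_zpowers_and_card_le (by norm_num) ha).2
  have hvertex := ncard_doubleCoset_eq (g := 1) (A := A) <| by
    simp only [inv_one, one_mul, mul_one, imp_self, implies_true]
  have hopposite := ncard_doubleCoset_eq (g := antipode a b) (A := A) <| by
    rintro - ⟨m, rfl⟩
    refine ⟨-m, ?_⟩
    dsimp only
    rw [mul_assoc, ← ((h.semiconjBy_antipode_inv ha hz).zpow_right m).eq, inv_mul_cancel_left,
      inv_zpow']
  have hring := ncard_doubleCoset_le b A A
  have hring' := ncard_doubleCoset_le (b ^ 2) A A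
  rw [icosahedralSet, icosahedralReps]
  simp only [Set.biUnion_insert, Set.biUnion_singleton]
  grw [Set.ncard_union_le, Set.ncard_union_le, Set.ncard_union_le, hvertex, hopposite, hring,
    hring', hA]

theorem finite_and_card_le_of_fullTwist_eq_one (h : BraidRel a b) (ha : a ^ 5 = 1)
    (hz : fullTwist a b = 1) (hab : Subgroup.closure {a, b} = ⊤) :
    Finite G ∧ Nat.card G ≤ 60 := by
  have huniv := h.icosahedralSet_eq_univ ha hz hab
  have := (finite_zpowers_and_card_le (by norm_num) ha).1
  constructor
  · exact Set.finite_univ_iff.mp (huniv ▸ finite_icosahedralSet)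
  · rw [← Set.ncard_univ, ← huniv]
    exact h.ncard_icosahedralSet_le ha hz

end TrivialFullTwist

theorem finite_and_card_le (h : BraidRel a b) (ha : a ^ 5 = 1)
    (hab : Subgroup.closure {a, b} = ⊤) : Finite G ∧ Nat.card G ≤ 600 := by
  set Z := Subgroup.zpowers (fullTwist a b)
  have : Z.Normal := zpowers_normal_of_mem_center (h.fullTwist_mem_center hab)
  let π := QuotientGroup.mk' Z
  have hπz : fullTwist (π a) (π b) = 1 := by
    rw [← map_fullTwist]
    exact (QuotientGroup.eq_one_iff _).mpr (Subgroup.mem_zpowers _)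
  obtain ⟨hfin, hquot⟩ := (h.map π).finite_and_card_le_of_fullTwist_eq_one
    (by rw [← map_pow, ha, map_one]) hπz
    (closure_pair_map_eq_top (QuotientGroup.mk'_surjective Z) hab)
  obtain ⟨hZfin, hZ⟩ := finite_zpowers_and_card_le (by norm_num) (h.fullTwist_pow_ten ha)
  refine ⟨Finite.of_subgroup_quotient Z, ?_⟩
  rw [Subgroup.card_eq_card_quotient_mul_card_subgroup Z]
  exact Nat.mul_le_mul hquot hZ

end BraidRel

section SpecialLinearGroup

open Matrix
open scoped MatrixGroups

variable {n R : Type*} [DecidableEq n] [Fintype n] [CommRing R]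

theorem range_toGL_eq_ker_det :
    (SpecialLinearGroup.toGL (n := n) (R := R)).range = GeneralLinearGroup.det.ker := by
  ext g
  constructor
  · rintro ⟨A, rfl⟩
    exact MonoidHom.mem_ker.mpr (Units.ext A.det_coe)
  · intro hg
    exact ⟨⟨g.1, congrArg Units.val (MonoidHom.mem_ker.mp hg)⟩, Units.ext rfl⟩

variable (n R) in
theorem card_specialLinearGroup_mul_card_units [Nonempty n] :
    Nat.card (SpecialLinearGroup n R) * Nat.card Rˣ = Nat.card (GL n R) := by
  have hdet : Nat.card Rˣ = (GeneralLinearGroup.det (n := n) (R := R)).ker.index := by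
    rw [Subgroup.index_ker, MonoidHom.range_eq_top.mpr GeneralLinearGroup.det_surjective,
      Subgroup.card_top]
  rw [Nat.card_congr (MonoidHom.ofInjective SpecialLinearGroup.toGL_injective).toEquiv,
    range_toGL_eq_ker_det, hdet, Subgroup.card_mul_index]

theorem card_specialLinearGroup_fin_two (K : Type*) [Field K] [Finite K] :
    Nat.card SL(2, K) = Nat.card K * (Nat.card K ^ 2 - 1) := by
  have := Fintype.ofFinite K
  have h := card_specialLinearGroup_mul_card_units (Fin 2) K
  have hunits : 0 < Nat.card K - 1 := Nat.sub_pos_of_lt Finite.one_lt_card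
  rw [Nat.card_units, card_GL_field, Fin.prod_univ_two, ← Nat.card_eq_fintype_card] at h
  refine Nat.eq_of_mul_eq_mul_right hunits (h.trans ?_)
  simp only [Fin.val_zero, Fin.val_one, pow_zero, pow_one]
  rw [pow_two (Nat.card K), ← Nat.mul_sub_one]
  ring

theorem transvection_pow {i j : n} (hij : i ≠ j) (c : R) (k : ℕ) :
    SpecialLinearGroup.transvection hij c ^ k = SpecialLinearGroup.transvection hij (k * c) := by
  induction k with
  | zero => rw [pow_zero, Nat.cast_zero, zero_mul, SpecialLinearGroup.transvection_coeff_zero]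
  | succ k ih =>
    rw [pow_succ, ih, ← SpecialLinearGroup.transvection_add, Nat.cast_succ, add_one_mul]

theorem transvection_pow_charP (p : ℕ) [CharP R p] {i j : n} (hij : i ≠ j) (c : R) :
    SpecialLinearGroup.transvection hij c ^ p = 1 := by
  rw [transvection_pow, CharP.cast_eq_zero, zero_mul, SpecialLinearGroup.transvection_coeff_zero]

/-- The transvection `!![1, c; 0, 1]`. -/
abbrev upperTransvection (c : R) : SL(2, R) := SpecialLinearGroup.transvection zero_ne_one c

/-- The transvection `!![1, 0; c, 1]`. -/
abbrev lowerTransvection (c : R) : SL(2, R) := SpecialLinearGroup.transvection one_ne_zero c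

variable (R) in
theorem braidRel_transvection : BraidRel (upperTransvection (1 : R)) (lowerTransvection (-1)) := by
  ext i j
  fin_cases i <;> fin_cases j <;>
    simp [SpecialLinearGroup.transvection_coe, Matrix.mul_apply, Fin.sum_univ_two]

variable (R) in
theorem fullTwist_transvection :
    fullTwist (upperTransvection (1 : R)) (lowerTransvection (-1)) = -1 := by
  ext i j
  fin_cases i <;> fin_cases j <;>
    simp [fullTwist, pow_two, SpecialLinearGroup.transvection_coe, Matrix.mul_apply,
      Fin.sum_univ_two]

theorem closure_transvections_eq_top (p : ℕ) [Fact p.Prime] :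
    Subgroup.closure {upperTransvection (1 : ZMod p), lowerTransvection (-1)} = ⊤ := by
  set H := Subgroup.closure {upperTransvection (1 : ZMod p), lowerTransvection (-1)}
  have hupper (c : ZMod p) : upperTransvection c ∈ H := by
    have hpow : upperTransvection 1 ^ c.val ∈ H := H.pow_mem (Subgroup.subset_closure (.inl rfl)) _
    rwa [transvection_pow, mul_one, ZMod.natCast_zmod_val] at hpow
  have hlower (c : ZMod p) : lowerTransvection c ∈ H := by
    have hpow : lowerTransvection (-1) ^ (-c).val ∈ H :=
      H.pow_mem (Subgroup.subset_closure (.inr rfl)) _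
    rwa [transvection_pow, mul_neg_one, ZMod.natCast_zmod_val, neg_neg] at hpow
  refine top_unique fun g _ ↦ SL2.transvection_induction (· ∈ H) (fun i j hij c ↦ ?_)
    (fun _ _ ↦ H.mul_mem) g
  fin_cases i <;> fin_cases j
  · exact absurd rfl hij
  · exact hupper c
  · exact hlower c
  · exact absurd rfl hij

end SpecialLinearGroup

section Trefoil

open scoped MatrixGroups

theorem braidRel_of : BraidRel (.of true : TrefoilGroup) (.of false) := by
  have h : PresentedGroup.mk trefoilRels _ = 1 := PresentedGroup.one_of_mem rfl
  simp only [map_mul, map_inv, mul_inv_eq_one] at h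
  exact h

theorem closure_of_eq_top : Subgroup.closure {(.of true : TrefoilGroup), .of false} = ⊤ := by
  have hrange : Set.range PresentedGroup.of = {(.of true : TrefoilGroup), .of false} := by
    ext x
    simp only [Set.mem_range, Bool.exists_bool, Set.mem_insert_iff, Set.mem_singleton_iff, eq_comm,
      or_comm]
  rw [← hrange, PresentedGroup.closure_range_of]

/-- The representation of the trefoil group over `R` in which the two generators act as
transvections: the reduction to `R` of the standard map from the braid group onto `SL(2, ℤ)`. -/
def trefoilToSL (R : Type*) [CommRing R] : TrefoilGroup →* SL(2, R) :=
  PresentedGroup.toGroup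
    (f := fun i ↦ if i then upperTransvection 1 else lowerTransvection (-1)) <| by
      rintro - rfl
      simpa only [map_mul, map_inv, FreeGroup.lift_apply_of, if_true, Bool.false_eq_true, if_false,
        mul_inv_eq_one] using (braidRel_transvection R).eq

theorem trefoilToSL_of_true (R : Type*) [CommRing R] :
    trefoilToSL R (.of true) = upperTransvection 1 :=
  PresentedGroup.toGroup.of _

theorem trefoilToSL_of_false (R : Type*) [CommRing R] :
    trefoilToSL R (.of false) = lowerTransvection (-1) :=
  PresentedGroup.toGroup.of _

theorem trefoilToSL_fullTwist (R : Type*) [CommRing R] :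
    trefoilToSL R (fullTwist (.of true) (.of false)) = -1 := by
  rw [map_fullTwist, trefoilToSL_of_true, trefoilToSL_of_false, fullTwist_transvection]

theorem trefoilToSL_surjective (p : ℕ) [Fact p.Prime] :
    Function.Surjective (trefoilToSL (ZMod p)) := by
  rw [← MonoidHom.range_eq_top, MonoidHom.range_eq_map, ← closure_of_eq_top,
    MonoidHom.map_closure, Set.image_pair, trefoilToSL_of_true, trefoilToSL_of_false,
    closure_transvections_eq_top]

theorem prod_trefoilToSL_surjective {n p : ℕ} [Fact p.Prime] (hn : n.Coprime 12)
    {φ : TrefoilGroup →* Multiplicative (ZMod n)} (hφa : φ (.of true) = .ofAdd 1)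
    (hφb : φ (.of false) = .ofAdd 1) :
    Function.Surjective (φ.prod (trefoilToSL (ZMod p))) := by
  refine prod_surjective_of_forall_exists (fun x ↦ ?_) (trefoilToSL_surjective p)
  have hφz : φ (fullTwist (.of true) (.of false) ^ 2) = .ofAdd 12 := by
    rw [map_pow, map_fullTwist, hφa, hφb, fullTwist]
    simp only [← ofAdd_add, ← ofAdd_nsmul]
    congr 1
    norm_num
  have hunit : IsUnit (12 : ZMod n) := mod_cast (ZMod.isUnit_iff_coprime 12 n).mpr hn.symm
  obtain ⟨k, hk⟩ := ZMod.intCast_surjective (x.toAdd * (12 : ZMod n)⁻¹)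
  refine ⟨(fullTwist (.of true) (.of false) ^ 2) ^ k, ?_, ?_⟩
  · rw [map_zpow, hφz, ← ofAdd_zsmul, zsmul_eq_mul, hk, mul_assoc, ZMod.inv_mul_of_unit _ hunit,
      mul_one, ofAdd_toAdd]
  · rw [map_zpow, map_pow, trefoilToSL_fullTwist, neg_one_sq, one_zpow]

theorem normalClosure_pow_le_ker_prod {n : ℕ} {φ : TrefoilGroup →* Multiplicative (ZMod n)}
    (hφa : φ (.of true) = .ofAdd 1) :
    Subgroup.normalClosure {(.of true : TrefoilGroup) ^ n} ≤
      (φ.prod (trefoilToSL (ZMod n))).ker := by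
  refine Subgroup.normalClosure_le_normal (Set.singleton_subset_iff.mpr ?_)
  rw [SetLike.mem_coe, MonoidHom.mem_ker, MonoidHom.prod_apply, map_pow, map_pow, hφa,
    trefoilToSL_of_true, transvection_pow_charP, ← ofAdd_nsmul, nsmul_one, CharP.cast_eq_zero]
  rfl

theorem finiteIndex_and_index_normalClosure_pow_five_le :
    (Subgroup.normalClosure {(.of true : TrefoilGroup) ^ 5}).FiniteIndex ∧
      (Subgroup.normalClosure {(.of true : TrefoilGroup) ^ 5}).index ≤ 600 := by
  set M := Subgroup.normalClosure {(.of true : TrefoilGroup) ^ 5}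
  let π := QuotientGroup.mk' M
  have hπa : π (.of true) ^ 5 = 1 := by
    rw [← map_pow]
    exact (QuotientGroup.eq_one_iff _).mpr (Subgroup.subset_normalClosure rfl)
  obtain ⟨hfin, hcard⟩ := (braidRel_of.map π).finite_and_card_le hπa
    (closure_pair_map_eq_top (QuotientGroup.mk'_surjective M) closure_of_eq_top)
  exact ⟨Subgroup.finiteIndex_of_finite_quotient, M.index_eq_card ▸ hcard⟩

theorem normalClosure_pow_five_eq_ker_prod {φ : TrefoilGroup →* Multiplicative (ZMod 5)}
    (hφa : φ (.of true) = .ofAdd 1)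
    (hsurj : Function.Surjective (φ.prod (trefoilToSL (ZMod 5)))) :
    Subgroup.normalClosure {(.of true : TrefoilGroup) ^ 5} =
      (φ.prod (trefoilToSL (ZMod 5))).ker := by
  have : Fact (Nat.Prime 5) := ⟨by norm_num⟩
  have hindex : (φ.prod (trefoilToSL (ZMod 5))).ker.index = 600 := by
    rw [Subgroup.index_ker, MonoidHom.range_eq_top.mpr hsurj, Subgroup.card_top, Nat.card_prod,
      card_specialLinearGroup_fin_two, Nat.card_congr Multiplicative.toAdd, Nat.card_zmod]
    rfl
  obtain ⟨hfin, hle⟩ := finiteIndex_and_index_normalClosure_pow_five_le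
  exact (normalClosure_pow_le_ker_prod hφa).eq_of_not_lt fun hlt ↦
    (Subgroup.index_strictAnti hlt).not_ge (hindex ▸ hle)

end Trefoil

/-- With `φ₅ : G → ℤ/5ℤ` sending both generators to `1`, `U₅ = ker φ₅`
and `M₅` the normal closure of `{a⁵}`, we have `M₅ ≤ U₅` and `U₅/M₅ ≅ SL(2, ℤ/5ℤ)`. -/
theorem statement10 (φ : TrefoilGroup →* Multiplicative (ZMod 5))
    (hφa : φ (PresentedGroup.of true) = Multiplicative.ofAdd 1)
    (hφb : φ (PresentedGroup.of false) = Multiplicative.ofAdd 1) :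
    Subgroup.normalClosure {(PresentedGroup.of true : TrefoilGroup) ^ 5} ≤ φ.ker ∧
    Nonempty
      ((↥φ.ker ⧸ (Subgroup.normalClosure
          {(PresentedGroup.of true : TrefoilGroup) ^ 5}).subgroupOf φ.ker)
        ≃* Matrix.SpecialLinearGroup (Fin 2) (ZMod 5)) := by
  have : Fact (Nat.Prime 5) := ⟨by norm_num⟩
  have hsurj : Function.Surjective (φ.prod (trefoilToSL (ZMod 5))) :=
    prod_trefoilToSL_surjective (by norm_num) hφa hφb
  have hker := normalClosure_pow_five_eq_ker_prod hφa hsurj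
  refine ⟨hker.le.trans ?_, ⟨kerQuotientEquivOfProdSurjective hker hsurj⟩⟩
  rw [MonoidHom.ker_prod]
  exact inf_le_left
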